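/- Let c ∈ ℝ and set s₀ = (c² + √(c⁴ + 16))/2. At the point (s, d) = (s₀, 0) with A = 0, the partial derivatives of F₁ and F₂ with respect to s and d are ∂F₁/∂s = 8(c⁴ + c²√(c⁴ + 16) + 16), ∂F₁/∂d = 0, ∂F₂/∂s = 0, and ∂F₂/∂d = 1; in particular the Jacobian determinant of (F₁, F₂) with respect to (s, d) at (s₀, 0; 0) equals 8(c⁴ + c²√(c⁴ + 16) + 16) ≠ 0. -/

import Mathlib

/-- $F_1(s,d;A) = (d^2-4)^2(s^2-4)(3Ad+s) + 16c^2(d^2-s^2)$, where $c$ is the angular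
momentum. -/
noncomputable def F₁ (c A s d : ℝ) : ℝ :=
  (d ^ 2 - 4) ^ 2 * (s ^ 2 - 4) * (3 * A * d + s) + 16 * c ^ 2 * (d ^ 2 - s ^ 2)

/-- $F_2(s,d;A) = 3As + d + \frac34 A (d^2-s^2)\ln\frac{s+2}{s-2}$. -/
noncomputable def F₂ (A s d : ℝ) : ℝ :=
  3 * A * s + d + (3 / 4) * A * (d ^ 2 - s ^ 2) * Real.log ((s + 2) / (s - 2))

/-! On the slice $A = d = 0$ we have $F_1 = 16 s\,q(s)$ with $q(s) = s^2 - c^2 s - 4$, whose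
positive root is $s_0$. Hence $\partial F_1/\partial s = 16 s_0\,q'(s_0) = 16 s_0 (2 s_0 - c^2)$
there, and $2 s_0 - c^2 = \sqrt{c^4+16}$ is the square root of the discriminant. For $A = 0$,
moreover, $F_1$ is even in $d$ and $F_2$ is just $d$. -/

theorem hasDerivAt_F₁_fst (c A s d : ℝ) :
    HasDerivAt (fun s => F₁ c A s d)
      ((d ^ 2 - 4) ^ 2 * (2 * s * (3 * A * d + s) + (s ^ 2 - 4)) - 32 * c ^ 2 * s) s := by
  have hquadratic := ((hasDerivAt_pow 2 s).sub_const 4).const_mul ((d ^ 2 - 4) ^ 2)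
  have hlinear := (hasDerivAt_id' s).const_add (3 * A * d)
  have hmomentum := ((hasDerivAt_pow 2 s).const_sub (d ^ 2)).const_mul (16 * c ^ 2)
  exact ((hquadratic.mul hlinear).add hmomentum).congr_deriv (by push_cast; ring)

theorem hasDerivAt_F₁_snd (c A s d : ℝ) :
    HasDerivAt (fun d => F₁ c A s d)
      ((s ^ 2 - 4) * (d ^ 2 - 4) * (4 * d * (3 * A * d + s) + 3 * A * (d ^ 2 - 4)) +
        32 * c ^ 2 * d) d := by
  have hquartic := (((hasDerivAt_pow 2 d).sub_const 4).fun_pow 2).mul_const (s ^ 2 - 4)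
  have hlinear := ((hasDerivAt_id' d).const_mul (3 * A)).add_const s
  have hmomentum := ((hasDerivAt_pow 2 d).sub_const (s ^ 2)).const_mul (16 * c ^ 2)
  exact ((hquartic.mul hlinear).add hmomentum).congr_deriv (by push_cast; ring)

theorem hasDerivAt_F₁_fst_of_sq_eq {c s : ℝ} (hs : s ^ 2 = c ^ 2 * s + 4) :
    HasDerivAt (fun s => F₁ c 0 s 0) (16 * s * (2 * s - c ^ 2)) s :=
  (hasDerivAt_F₁_fst c 0 s 0).congr_deriv (by linear_combination 16 * hs)

theorem F₂_zero (s d : ℝ) : F₂ 0 s d = d := by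
  simp [F₂]

/-- At $(s,d) = (s_0,0)$ with $s_0 = (c^2+\sqrt{c^4+16})/2$ and $A = 0$, the partial
derivatives are $\partial F_1/\partial s = 8(c^4 + c^2\sqrt{c^4+16} + 16)$,
$\partial F_1/\partial d = 0$, $\partial F_2/\partial s = 0$,
$\partial F_2/\partial d = 1$; in particular the Jacobian determinant equals
$8(c^4 + c^2\sqrt{c^4+16} + 16) \neq 0$. -/
theorem jacobian_at_circular_orbit (c s₀ : ℝ)
    (hs₀ : s₀ = (c ^ 2 + Real.sqrt (c ^ 4 + 16)) / 2) :
    HasDerivAt (fun s => F₁ c 0 s 0)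
      (8 * (c ^ 4 + c ^ 2 * Real.sqrt (c ^ 4 + 16) + 16)) s₀ ∧
    HasDerivAt (fun d => F₁ c 0 s₀ d) 0 0 ∧
    HasDerivAt (fun s => F₂ 0 s 0) 0 s₀ ∧
    HasDerivAt (fun d => F₂ 0 s₀ d) 1 0 ∧
    8 * (c ^ 4 + c ^ 2 * Real.sqrt (c ^ 4 + 16) + 16) * 1 - 0 * 0 =
      8 * (c ^ 4 + c ^ 2 * Real.sqrt (c ^ 4 + 16) + 16) ∧
    8 * (c ^ 4 + c ^ 2 * Real.sqrt (c ^ 4 + 16) + 16) ≠ 0 := by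
  have hsqrt : √(c ^ 4 + 16) ^ 2 = c ^ 4 + 16 := Real.sq_sqrt (by positivity)
  have hroot : s₀ ^ 2 = c ^ 2 * s₀ + 4 := by
    rw [hs₀]
    linear_combination hsqrt / 4
  have hdiscrim : 2 * s₀ - c ^ 2 = √(c ^ 4 + 16) := by
    linear_combination 2 * hs₀
  have hslope : 16 * s₀ * (2 * s₀ - c ^ 2) = 8 * (c ^ 4 + c ^ 2 * √(c ^ 4 + 16) + 16) := by
    rw [hdiscrim, hs₀]
    linear_combination 8 * hsqrt
  refine ⟨(hasDerivAt_F₁_fst_of_sq_eq hroot).congr_deriv hslope,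
    (hasDerivAt_F₁_snd c 0 s₀ 0).congr_deriv (by ring), ?_, ?_, by ring, by positivity⟩
  -- For `c = 0` we have `s₀ = 2`, where the logarithm in `F₂` is singular, so the factor `A = 0`
  -- must be used before differentiating.
  · simpa only [F₂_zero] using hasDerivAt_const s₀ (0 : ℝ)
  · simpa only [F₂_zero] using hasDerivAt_id' (0 : ℝ)
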